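/- arXiv:2410.15501 — 6 statements merged into one kernel-verified Lean document; each statement's English description precedes it below -/
import Mathlib

section
/- Let ρ be a d×d density matrix, let V be a linear subspace of ℂ^d with orthogonal projection P, and let ψ ∈ ℂ^d be a unit vector. Write ψ_S = Pψ and ψ_⊥ = ψ − Pψ. Then |⟨ψ, ρψ⟩ − ⟨ψ_S, ρψ_S⟩| ≤ 2·√(⟨ψ_⊥, ρψ_⊥⟩). -/
open Matrix
open scoped ComplexOrder

section
open scoped MatrixOrder

lemma aux_sqrt {d : ℕ} (ρ : Matrix (Fin d) (Fin d) ℂ) (hρ : ρ.PosSemidef) :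
    ∃ B : Matrix (Fin d) (Fin d) ℂ, ρ = Bᴴ * B :=
  CStarAlgebra.nonneg_iff_eq_star_mul_self.mp hρ.nonneg

end

lemma aux_dot {d : ℕ} (v : Fin d → ℂ) :
    star v ⬝ᵥ v = ((‖WithLp.toLp 2 v‖ ^ 2 : ℝ) : ℂ) := by
  rw [EuclideanSpace.norm_sq_eq]
  simp [dotProduct, Complex.conj_mul']

lemma aux_cs {d : ℕ} (B : Matrix (Fin d) (Fin d) ℂ) (v : Fin d → ℂ) :
    ‖WithLp.toLp 2 (B *ᵥ v)‖ ^ 2 ≤ (∑ i, ∑ j, ‖B i j‖ ^ 2) * ‖WithLp.toLp 2 v‖ ^ 2 := by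
  rw [EuclideanSpace.norm_sq_eq, EuclideanSpace.norm_sq_eq, Finset.sum_mul]
  refine Finset.sum_le_sum fun i _ => ?_
  have h1 : ‖(B *ᵥ v) i‖ ≤ ∑ j, ‖B i j‖ * ‖v j‖ := by
    simp only [mulVec, dotProduct]
    exact (norm_sum_le _ _).trans (by simp)
  calc _ ≤ (∑ j, ‖B i j‖ * ‖v j‖) ^ 2 := by
        exact pow_le_pow_left₀ (norm_nonneg _) h1 2
    _ ≤ _ := Finset.sum_mul_sq_le_sq_mul_sq _ _ _

lemma aux_tr {d : ℕ} (B : Matrix (Fin d) (Fin d) ℂ) (h : (Bᴴ * B).trace = 1) :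
    ∑ i, ∑ j, ‖B i j‖ ^ 2 = 1 := by
  rw [Finset.sum_comm]
  have : (((∑ j, ∑ i, ‖B i j‖ ^ 2 : ℝ)) : ℂ) = 1 := by
    rw [← h]
    simp [trace, mul_apply, Complex.conj_mul']
  exact_mod_cast this

lemma aux_quad {d : ℕ} (B : Matrix (Fin d) (Fin d) ℂ) (v : Fin d → ℂ) :
    star v ⬝ᵥ (Bᴴ * B) *ᵥ v = ((‖WithLp.toLp 2 (B *ᵥ v)‖ ^ 2 : ℝ) : ℂ) := by
  rw [← aux_dot, star_mulVec, ← mulVec_mulVec, dotProduct_mulVec]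

/-- Let `ρ` be a `d × d` density matrix, let `P` be the orthogonal projection
onto a linear subspace of `ℂ^d` (i.e. `P` is Hermitian and idempotent), and let `ψ` be a unit
vector. Writing `ψ_S = P ψ` and `ψ_⊥ = ψ - P ψ`, we have
`|⟨ψ, ρ ψ⟩ - ⟨ψ_S, ρ ψ_S⟩| ≤ 2 √(⟨ψ_⊥, ρ ψ_⊥⟩)`. -/
theorem stmt_1 {d : ℕ} (ρ : Matrix (Fin d) (Fin d) ℂ)
    (hρ : ρ.PosSemidef) (hρtr : ρ.trace = 1)
    (P : Matrix (Fin d) (Fin d) ℂ) (hPH : P.IsHermitian) (hPP : P * P = P)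
    (ψ : Fin d → ℂ) (hψ : star ψ ⬝ᵥ ψ = 1) :
    ‖(star ψ ⬝ᵥ ρ *ᵥ ψ) - (star (P *ᵥ ψ) ⬝ᵥ ρ *ᵥ (P *ᵥ ψ))‖ ≤
      2 * Real.sqrt ((star (ψ - P *ᵥ ψ) ⬝ᵥ ρ *ᵥ (ψ - P *ᵥ ψ)).re) := by
  obtain ⟨B, rfl⟩ : ∃ B : Matrix (Fin d) (Fin d) ℂ, ρ = Bᴴ * B :=
    aux_sqrt ρ hρ
  have hB := aux_tr B hρtr
  have hψ1 : ‖WithLp.toLp 2 ψ‖ ^ 2 = 1 := by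
    rw [aux_dot] at hψ
    exact_mod_cast hψ
  have hP1 : ‖WithLp.toLp 2 (P *ᵥ ψ)‖ ^ 2 ≤ 1 := by
    have e : star (P *ᵥ ψ) ⬝ᵥ (P *ᵥ ψ) = star ψ ⬝ᵥ (P *ᵥ ψ) := by
      rw [star_mulVec, hPH.eq, ← dotProduct_mulVec, mulVec_mulVec, hPP]
    have e2 : star (P *ᵥ ψ) ⬝ᵥ ψ = star ψ ⬝ᵥ (P *ᵥ ψ) := by
      rw [star_mulVec, hPH.eq, ← dotProduct_mulVec]
    have h : star (ψ - P *ᵥ ψ) ⬝ᵥ (ψ - P *ᵥ ψ) = 1 - star (P *ᵥ ψ) ⬝ᵥ (P *ᵥ ψ) := by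
      rw [star_sub, sub_dotProduct, dotProduct_sub, dotProduct_sub, hψ, e, e2]
      ring
    rw [aux_dot, aux_dot] at h
    have h' : ‖WithLp.toLp 2 (ψ - P *ᵥ ψ)‖ ^ 2 = 1 - ‖WithLp.toLp 2 (P *ᵥ ψ)‖ ^ 2 := by
      exact_mod_cast h
    nlinarith [sq_nonneg ‖WithLp.toLp 2 (ψ - P *ᵥ ψ)‖]
  have ha := aux_cs B ψ
  have hb := aux_cs B (P *ᵥ ψ)
  rw [hB, one_mul] at ha hb
  have ha1 := (sq_le_one_iff₀ (norm_nonneg _)).mp (ha.trans hψ1.le)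
  have hb1 := (sq_le_one_iff₀ (norm_nonneg _)).mp (hb.trans hP1)
  rw [aux_quad, aux_quad, aux_quad, Complex.ofReal_re, Real.sqrt_sq (norm_nonneg _),
    ← Complex.ofReal_sub, Complex.norm_real, Real.norm_eq_abs, mulVec_sub, WithLp.toLp_sub,
    sq_sub_sq, abs_mul]
  have h3 := abs_norm_sub_norm_le (WithLp.toLp 2 (B *ᵥ ψ)) (WithLp.toLp 2 (B *ᵥ P *ᵥ ψ))
  refine mul_le_mul ?_ h3 (abs_nonneg _) (by norm_num)
  rw [abs_of_nonneg (by positivity)]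
  linarith
end

section
/- Let ρ be a d×d density matrix and ε ∈ (0,1]. Let ψ^1, …, ψ^m ∈ ℂ^d be unit vectors and ô_1, …, ô_m ∈ ℝ. Define inductively: round t is a 'mistake' if |ô_t − ⟨ψ^t, ρψ^t⟩| ≥ (3/4)ε, and let S_t be the linear span of {ψ^r : r < t, round r is a mistake}, with P_t the orthogonal projection onto S_t. Suppose that for every t ∈ {1, …, m} the estimate satisfies |ô_t − ⟨P_t ψ^t, ρ P_t ψ^t⟩| < (3/8)ε. Then the number of mistakes among the m rounds is at most 256/(9ε²). -/
open Matrix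
open scoped ComplexOrder

lemma aux_inner {d : ℕ} (x y : Fin d → ℂ) :
    inner ℂ (WithLp.toLp 2 x : EuclideanSpace ℂ (Fin d)) (WithLp.toLp 2 y) = star x ⬝ᵥ y := by
  rw [EuclideanSpace.inner_eq_star_dotProduct, dotProduct_comm]

lemma aux_cs_s2 {d : ℕ} (x y : Fin d → ℂ) :
    ‖star x ⬝ᵥ y‖ ≤ ‖(WithLp.toLp 2 x : EuclideanSpace ℂ (Fin d))‖ *
      ‖(WithLp.toLp 2 y : EuclideanSpace ℂ (Fin d))‖ := by
  rw [← aux_inner]; exact norm_inner_le_norm _ _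

lemma aux_adj {d : ℕ} {A : Matrix (Fin d) (Fin d) ℂ} (hA : A.IsHermitian) (x y : Fin d → ℂ) :
    star (A *ᵥ x) ⬝ᵥ y = star x ⬝ᵥ A *ᵥ y := by
  rw [star_mulVec, hA.eq, dotProduct_mulVec]

lemma aux_frob {d : ℕ} (ρ : Matrix (Fin d) (Fin d) ℂ)
    (hρ : ρ.PosSemidef) (hρtr : ρ.trace = 1) : ∑ i, ∑ j, ‖ρ i j‖ ^ 2 ≤ 1 := by
  obtain ⟨B, hB⟩ : ∃ B : Matrix (Fin d) (Fin d) ℂ, ρ = Bᴴ * B :=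
    by
      open scoped MatrixOrder in
      exact (CStarAlgebra.nonneg_iff_eq_star_mul_self (a := ρ)).1 hρ.nonneg
  let b : Fin d → EuclideanSpace ℂ (Fin d) := fun i => WithLp.toLp 2 (fun k => B k i)
  have h1 : ∀ i j, ρ i j = inner ℂ (b i) (b j) := by
    intro i j
    rw [aux_inner, hB]
    rfl
  have h2 : ∑ i, ‖b i‖ ^ 2 = 1 := by
    have : ((∑ i, ‖b i‖ ^ 2 : ℝ) : ℂ) = 1 := by
      rw [← hρtr, Matrix.trace]
      push_cast
      refine Finset.sum_congr rfl fun i _ => ?_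
      rw [Matrix.diag_apply, h1, inner_self_eq_norm_sq_to_K]
      rfl
    exact_mod_cast this
  calc ∑ i, ∑ j, ‖ρ i j‖ ^ 2 ≤ ∑ i, ∑ j, ‖b i‖ ^ 2 * ‖b j‖ ^ 2 := by
        gcongr with i _ j _
        rw [h1, ← mul_pow]
        gcongr
        exact norm_inner_le_norm _ _
    _ = 1 := by
        rw [← Finset.sum_mul_sum, h2, one_mul]

lemma aux_bessel {d : ℕ} (ρ : Matrix (Fin d) (Fin d) ℂ)
    (hρ : ρ.PosSemidef) (hρtr : ρ.trace = 1) {ι : Type*} [Fintype ι]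
    (e : ι → EuclideanSpace ℂ (Fin d)) (he : Orthonormal ℂ e) :
    ∑ t, ‖(WithLp.toLp 2 (ρ *ᵥ (e t).ofLp) : EuclideanSpace ℂ (Fin d))‖ ^ 2 ≤ 1 := by
  let r : Fin d → EuclideanSpace ℂ (Fin d) := fun i => WithLp.toLp 2 (fun k => star (ρ i k))
  calc _ = ∑ t, ∑ i, ‖inner ℂ (e t) (r i)‖ ^ 2 := by
        refine Finset.sum_congr rfl fun t _ => ?_
        rw [EuclideanSpace.norm_sq_eq]
        refine Finset.sum_congr rfl fun i _ => ?_
        rw [norm_inner_symm]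
        have : inner ℂ (r i) (e t) = (ρ *ᵥ (e t).ofLp) i := by
          rw [show e t = WithLp.toLp 2 (e t).ofLp from rfl, aux_inner]
          simp [mulVec, dotProduct]
        rw [this]
    _ = ∑ i, ∑ t, ‖inner ℂ (e t) (r i)‖ ^ 2 := Finset.sum_comm
    _ ≤ ∑ i, ‖r i‖ ^ 2 := by
        gcongr with i _
        exact he.sum_inner_products_le _
    _ = ∑ i, ∑ j, ‖ρ i j‖ ^ 2 := by
        refine Finset.sum_congr rfl fun i _ => ?_
        rw [EuclideanSpace.norm_sq_eq]
        simp [r]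
    _ ≤ 1 := aux_frob ρ hρ hρtr

/-- **mistake bound for single-rank observables.**
Let `ρ` be a `d × d` density matrix and `ε ∈ (0,1]`.  Let `ψ 1, …, ψ m` be unit vectors in
`ℂ^d` and `ô 1, …, ô m` real estimates.  Round `t` is a *mistake* iff
`|ô t - ⟨ψ t, ρ ψ t⟩| ≥ (3/4) ε`; let `S t` be the span of the `ψ r` with `r < t` at which a
mistake occurred, and let `P t` be the orthogonal projection onto `S t` (encoded as a Hermitian
idempotent matrix fixing `S t` pointwise and with range inside `S t`).  If for every round the
estimate satisfies `|ô t - ⟨P t ψ t, ρ (P t ψ t)⟩| < (3/8) ε`, then the number of mistakes is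
at most `256 / (9 ε²)`. -/
theorem stmt_2 {d m : ℕ} (ρ : Matrix (Fin d) (Fin d) ℂ)
    (hρ : ρ.PosSemidef) (hρtr : ρ.trace = 1)
    (ε : ℝ) (hε0 : 0 < ε) (hε1 : ε ≤ 1)
    (ψ : Fin m → (Fin d → ℂ)) (hψ : ∀ t, star (ψ t) ⬝ᵥ ψ t = 1)
    (ohat : Fin m → ℝ)
    (mistake : Fin m → Prop)
    (hmistake : ∀ t, mistake t ↔
      3 / 4 * ε ≤ ‖(ohat t : ℂ) - star (ψ t) ⬝ᵥ ρ *ᵥ ψ t‖)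
    (P : Fin m → Matrix (Fin d) (Fin d) ℂ)
    (hPH : ∀ t, (P t).IsHermitian) (hPP : ∀ t, P t * P t = P t)
    (hPmem : ∀ t v, P t *ᵥ v ∈
      Submodule.span ℂ {x | ∃ r : Fin m, r < t ∧ mistake r ∧ x = ψ r})
    (hPfix : ∀ t, ∀ v ∈ Submodule.span ℂ {x | ∃ r : Fin m, r < t ∧ mistake r ∧ x = ψ r},
      P t *ᵥ v = v)
    (hest : ∀ t, ‖(ohat t : ℂ) - star (P t *ᵥ ψ t) ⬝ᵥ ρ *ᵥ (P t *ᵥ ψ t)‖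
      < 3 / 8 * ε) :
    ({t : Fin m | mistake t}.ncard : ℝ) ≤ 256 / (9 * ε ^ 2) := by
  classical
  set S : Fin m → Submodule ℂ (Fin d → ℂ) := fun t =>
    Submodule.span ℂ {x | ∃ r : Fin m, r < t ∧ mistake r ∧ x = ψ r} with hS
  let L : (Fin d → ℂ) → EuclideanSpace ℂ (Fin d) := fun v => WithLp.toLp 2 v
  let η : Fin m → Fin d → ℂ := fun t => ψ t - P t *ᵥ ψ t
  have hperp : ∀ t, ∀ v ∈ S t, star v ⬝ᵥ η t = 0 := by
    intro t v hv
    rw [← hPfix t v hv, aux_adj (hPH t), mulVec_sub, mulVec_mulVec, hPP, sub_self,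
      dotProduct_zero]
  have hmem : ∀ r t, r < t → mistake r → η r ∈ S t := by
    intro r t hrt hr
    refine Submodule.sub_mem _ (Submodule.subset_span ⟨r, hrt, hr, rfl⟩) ?_
    refine Submodule.span_mono ?_ (hPmem r (ψ r))
    rintro x ⟨s, hs, hs', rfl⟩
    exact ⟨s, hs.trans hrt, hs', rfl⟩
  have hψn : ∀ t, ‖L (ψ t)‖ = 1 := by
    intro t
    have h : (inner ℂ (L (ψ t)) (L (ψ t)) : ℂ) = 1 := by rw [aux_inner, hψ]
    rw [inner_self_eq_norm_sq_to_K] at h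
    have h' : ‖L (ψ t)‖ ^ 2 = 1 := by
      have h2 : ((‖L (ψ t)‖ ^ 2 : ℝ) : ℂ) = 1 := by
        push_cast
        exact h
      exact_mod_cast h2
    nlinarith [norm_nonneg (L (ψ t))]
  have hpyth : ∀ t, ‖L (P t *ᵥ ψ t)‖ * ‖L (P t *ᵥ ψ t)‖ + ‖L (η t)‖ * ‖L (η t)‖ = 1 := by
    intro t
    have h0 : (inner ℂ (L (P t *ᵥ ψ t)) (L (η t)) : ℂ) = 0 := by
      rw [aux_inner]; exact hperp t _ (hPmem t _)
    have := norm_add_sq_eq_norm_sq_add_norm_sq_of_inner_eq_zero _ _ h0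
    rw [← this]
    have h2 : L (P t *ᵥ ψ t) + L (η t) = L (ψ t) := by
      simp only [L, ← WithLp.toLp_add]
      congr 1
      simp [η]
    rw [h2, hψn, one_mul]
  have hφ1 : ∀ t, ‖L (P t *ᵥ ψ t)‖ ≤ 1 := fun t => by
    nlinarith [hpyth t, norm_nonneg (L (P t *ᵥ ψ t)), norm_nonneg (L (η t))]
  have hη1 : ∀ t, ‖L (η t)‖ ≤ 1 := fun t => by
    nlinarith [hpyth t, norm_nonneg (L (P t *ᵥ ψ t)), norm_nonneg (L (η t))]
  have hbig : ∀ t, mistake t → 3 / 16 * ε ≤ ‖L (ρ *ᵥ η t)‖ := by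
    intro t ht
    have h1 := (hmistake t).1 ht
    have h2 := hest t
    have h3 : star (ψ t) ⬝ᵥ ρ *ᵥ ψ t - star (P t *ᵥ ψ t) ⬝ᵥ ρ *ᵥ (P t *ᵥ ψ t)
        = star (ψ t) ⬝ᵥ ρ *ᵥ η t + star (ρ *ᵥ η t) ⬝ᵥ (P t *ᵥ ψ t) := by
      rw [aux_adj hρ.isHermitian]
      simp only [η, mulVec_sub, dotProduct_sub, star_sub, sub_dotProduct]
      ring
    have h4 : ‖star (ψ t) ⬝ᵥ ρ *ᵥ ψ t - star (P t *ᵥ ψ t) ⬝ᵥ ρ *ᵥ (P t *ᵥ ψ t)‖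
        ≤ 2 * ‖L (ρ *ᵥ η t)‖ := by
      rw [h3]
      refine (norm_add_le _ _).trans ?_
      have a1 := aux_cs_s2 (ψ t) (ρ *ᵥ η t)
      have a2 := aux_cs_s2 (ρ *ᵥ η t) (P t *ᵥ ψ t)
      have a3 := hψn t
      have a4 := hφ1 t
      change _ ≤ ‖L (ψ t)‖ * ‖L (ρ *ᵥ η t)‖ at a1
      change _ ≤ ‖L (ρ *ᵥ η t)‖ * ‖L (P t *ᵥ ψ t)‖ at a2
      rw [a3] at a1
      nlinarith [norm_nonneg (L (ρ *ᵥ η t))]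
    have h5 := norm_sub_le_norm_sub_add_norm_sub (ohat t : ℂ)
      (star (P t *ᵥ ψ t) ⬝ᵥ ρ *ᵥ (P t *ᵥ ψ t)) (star (ψ t) ⬝ᵥ ρ *ᵥ ψ t)
    rw [norm_sub_rev (star (P t *ᵥ ψ t) ⬝ᵥ ρ *ᵥ (P t *ᵥ ψ t))] at h5
    linarith
  have hηpos : ∀ t, mistake t → 0 < ‖L (η t)‖ := by
    intro t ht
    rw [norm_pos_iff]
    intro h
    have h0 : η t = 0 := by simpa [L] using h
    have := hbig t ht
    rw [h0] at this
    simp [L] at this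
    linarith
  let e : {t : Fin m // mistake t} → EuclideanSpace ℂ (Fin d) := fun t =>
    ((‖L (η t)‖⁻¹ : ℝ) : ℂ) • L (η t)
  have hlt : ∀ r t : Fin m, r < t → mistake r → inner ℂ (L (η r)) (L (η t)) = (0 : ℂ) := by
    intro r t hrt hr
    rw [aux_inner]
    exact hperp t _ (hmem r t hrt hr)
  have he : Orthonormal ℂ e := by
    constructor
    · intro t
      have := hηpos t t.2
      simp only [e, norm_smul, Complex.norm_real, norm_inv, norm_norm]
      exact inv_mul_cancel₀ this.ne'
    · intro r t hrt
      have : inner ℂ (L (η r)) (L (η t)) = (0 : ℂ) := by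
        rcases lt_or_gt_of_ne (fun h => hrt (Subtype.ext h) : (r : Fin m) ≠ t) with h | h
        · exact hlt _ _ h r.2
        · exact inner_eq_zero_symm.1 (hlt _ _ h t.2)
      simp only [e, inner_smul_left, inner_smul_right, this, mul_zero]
  have hB := aux_bessel ρ hρ hρtr e he
  have hlow : ∀ t, (3 / 16 * ε) ^ 2 ≤
      ‖(WithLp.toLp 2 (ρ *ᵥ (e t).ofLp) : EuclideanSpace ℂ (Fin d))‖ ^ 2 := by
    intro t
    gcongr
    have h1 : (WithLp.toLp 2 (ρ *ᵥ (e t).ofLp) : EuclideanSpace ℂ (Fin d))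
        = ((‖L (η t)‖⁻¹ : ℝ) : ℂ) • L (ρ *ᵥ η t) := by
      simp only [e, L, WithLp.ofLp_smul, mulVec_smul, WithLp.toLp_smul]
    rw [h1, norm_smul, Complex.norm_real, norm_inv, norm_norm]
    have h2 := (one_le_inv₀ (hηpos t t.2)).2 (hη1 t)
    have h3 := hbig t t.2
    nlinarith [norm_nonneg (L (ρ *ᵥ η t))]
  have hsum := Finset.sum_le_sum (s := Finset.univ) fun t _ => hlow t
  rw [Finset.sum_const, Finset.card_univ, nsmul_eq_mul] at hsum
  have hcard : {t : Fin m | mistake t}.ncard = Fintype.card {t : Fin m // mistake t} := by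
    rw [← Nat.card_coe_set_eq, ← Nat.card_eq_fintype_card]; rfl
  rw [hcard, le_div_iff₀ (by positivity)]
  nlinarith
end

section
/- For every d×d density matrix ρ and every ε ∈ (0,1], there exists a linear subspace S of ℂ^d with dim S ≤ 4/ε² such that, with P the orthogonal projection onto S, every unit vector ψ ∈ ℂ^d satisfies |⟨ψ, ρψ⟩ − ⟨Pψ, ρPψ⟩| ≤ ε. -/
open Matrix
open scoped ComplexOrder

/-- For every `d × d` density matrix `ρ` and `ε ∈ (0,1]` there is a linear
subspace `S` of `ℂ^d` of dimension at most `4/ε²` such that, with `P` the orthogonal projection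
onto `S` (a Hermitian idempotent whose range lies in `S` and which fixes `S` pointwise), every
unit vector `ψ` satisfies `|⟨ψ, ρ ψ⟩ - ⟨P ψ, ρ (P ψ)⟩| ≤ ε`. -/
theorem stmt_3 {d : ℕ} (ρ : Matrix (Fin d) (Fin d) ℂ)
    (hρ : ρ.PosSemidef) (hρtr : ρ.trace = 1)
    (ε : ℝ) (hε0 : 0 < ε) (hε1 : ε ≤ 1) :
    ∃ (S : Submodule ℂ (Fin d → ℂ)) (P : Matrix (Fin d) (Fin d) ℂ),
      (Module.finrank ℂ S : ℝ) ≤ 4 / ε ^ 2 ∧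
      P.IsHermitian ∧ P * P = P ∧
      (∀ v, P *ᵥ v ∈ S) ∧ (∀ v ∈ S, P *ᵥ v = v) ∧
      ∀ ψ : Fin d → ℂ, star ψ ⬝ᵥ ψ = 1 →
        ‖(star ψ ⬝ᵥ ρ *ᵥ ψ) - (star (P *ᵥ ψ) ⬝ᵥ ρ *ᵥ (P *ᵥ ψ))‖ ≤ ε := by
  classical
  have hsp := hρ.1.spectral_theorem
  rw [Unitary.conjStarAlgAut_apply] at hsp
  have hUU : star (hρ.1.eigenvectorUnitary : Matrix (Fin d) (Fin d) ℂ) *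
      (hρ.1.eigenvectorUnitary : Matrix (Fin d) (Fin d) ℂ) = 1 := Unitary.coe_star_mul_self _
  have hUU' : (hρ.1.eigenvectorUnitary : Matrix (Fin d) (Fin d) ℂ) *
      star (hρ.1.eigenvectorUnitary : Matrix (Fin d) (Fin d) ℂ) = 1 := Unitary.coe_mul_star_self _
  have htr := hρ.1.trace_eq_sum_eigenvalues
  rw [hρtr] at htr
  have hl0 := hρ.eigenvalues_nonneg
  generalize (hρ.1.eigenvectorUnitary : Matrix (Fin d) (Fin d) ℂ) = U at hsp hUU hUU'
  generalize hρ.1.eigenvalues = l at hsp htr hl0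
  have hsum : ∑ i, l i = 1 := by
    have : ((∑ i, l i : ℝ) : ℂ) = 1 := by push_cast; exact htr.symm
    exact_mod_cast this
  rw [star_eq_conjTranspose] at hsp hUU hUU'
  let e : Fin d → ℂ := fun i => if ε < l i then 1 else 0
  have hcard : ((Finset.univ.filter (fun i => ε < l i)).card : ℝ) * ε ≤ 1 := by
    rw [← hsum, ← nsmul_eq_mul]
    calc _ ≤ ∑ i ∈ Finset.univ.filter (fun i => ε < l i), l i :=
          Finset.card_nsmul_le_sum _ _ _ (fun i hi => (Finset.mem_filter.1 hi).2.le)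
      _ ≤ ∑ i, l i := Finset.sum_le_sum_of_subset_of_nonneg (Finset.filter_subset _ _)
          (fun i _ _ => hl0 i)
  have hPP : (U * diagonal e * Uᴴ) * (U * diagonal e * Uᴴ) = U * diagonal e * Uᴴ := by
    calc _ = U * diagonal e * (Uᴴ * U) * (diagonal e * Uᴴ) := by simp only [Matrix.mul_assoc]
      _ = U * (diagonal e * diagonal e) * Uᴴ := by rw [hUU]; simp only [Matrix.mul_assoc, Matrix.one_mul]
      _ = _ := by
        rw [diagonal_mul_diagonal]
        congr 3
        funext i
        simp [e]
  have hPH : (U * diagonal e * Uᴴ)ᴴ = U * diagonal e * Uᴴ := by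
    have : star e = e := by funext i; simp only [e, Pi.star_apply]; split_ifs <;> simp
    simp [conjTranspose_mul, diagonal_conjTranspose, this, Matrix.mul_assoc]
  have key : ρ - (U * diagonal e * Uᴴ)ᴴ * ρ * (U * diagonal e * Uᴴ)
      = U * diagonal (fun i => if ε < l i then 0 else (l i : ℂ)) * Uᴴ := by
    rw [hPH, hsp]
    have : U * diagonal e * Uᴴ * (U * diagonal (RCLike.ofReal ∘ l) * Uᴴ) * (U * diagonal e * Uᴴ)
      = U * (diagonal e * diagonal (RCLike.ofReal ∘ l) * diagonal e) * Uᴴ := by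
      calc _ = U * diagonal e * (Uᴴ * U) * diagonal (RCLike.ofReal ∘ l) * (Uᴴ * U) * (diagonal e * Uᴴ) := by
            simp only [Matrix.mul_assoc]
        _ = _ := by rw [hUU]; simp only [Matrix.mul_assoc, Matrix.one_mul]
    rw [this, ← Matrix.sub_mul, ← Matrix.mul_sub, diagonal_mul_diagonal, diagonal_mul_diagonal,
      diagonal_sub]
    congr 3
    funext i
    simp only [e, Function.comp]
    split_ifs <;> simp
  refine ⟨LinearMap.range (U * diagonal e * Uᴴ).mulVecLin, U * diagonal e * Uᴴ, ?_, hPH, hPP,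
    fun v => ⟨v, rfl⟩, ?_, ?_⟩
  · have h1 : (U * diagonal e * Uᴴ).rank ≤ (Finset.univ.filter (fun i => ε < l i)).card := by
      refine (rank_mul_le_left _ _).trans ((rank_mul_le_right _ _).trans ?_)
      rw [rank_diagonal, Fintype.card_subtype]
      refine Finset.card_le_card fun i hi => ?_
      simpa [e] using hi
    have h2 : ((U * diagonal e * Uᴴ).rank : ℝ) ≤ (Finset.univ.filter (fun i => ε < l i)).card := by
      exact_mod_cast h1
    change ((U * diagonal e * Uᴴ).rank : ℝ) ≤ _
    rw [le_div_iff₀ (by positivity)]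
    nlinarith [mul_le_mul_of_nonneg_right h2 (sq_nonneg ε), mul_le_mul_of_nonneg_right hcard hε0.le]
  · rintro _ ⟨w, rfl⟩
    simp only [mulVecLin_apply, mulVec_mulVec, hPP]
  · intro ψ hψ
    have h1 : (star ψ ⬝ᵥ ρ *ᵥ ψ) - (star ((U * diagonal e * Uᴴ) *ᵥ ψ) ⬝ᵥ ρ *ᵥ ((U * diagonal e * Uᴴ) *ᵥ ψ))
        = star ψ ⬝ᵥ (ρ - (U * diagonal e * Uᴴ)ᴴ * ρ * (U * diagonal e * Uᴴ)) *ᵥ ψ := by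
      rw [sub_mulVec, dotProduct_sub, star_mulVec, ← dotProduct_mulVec, mulVec_mulVec, mulVec_mulVec,
        Matrix.mul_assoc _ ρ]
    rw [h1, key]
    have h2 : ∀ M : Matrix (Fin d) (Fin d) ℂ, star ψ ⬝ᵥ (U * M * Uᴴ) *ᵥ ψ
        = star (Uᴴ *ᵥ ψ) ⬝ᵥ M *ᵥ (Uᴴ *ᵥ ψ) := by
      intro M
      rw [star_mulVec, ← dotProduct_mulVec, mulVec_mulVec, mulVec_mulVec,
        conjTranspose_conjTranspose, Matrix.mul_assoc]
    have h3 : star (Uᴴ *ᵥ ψ) ⬝ᵥ (Uᴴ *ᵥ ψ) = 1 := by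
      have := h2 1
      rw [Matrix.mul_one, hUU', one_mulVec, one_mulVec, hψ] at this
      exact this.symm
    rw [h2]
    generalize Uᴴ *ᵥ ψ = φ at h3
    have h4 : ∑ i, ‖φ i‖ ^ 2 = 1 := by
      have : ((∑ i, ‖φ i‖ ^ 2 : ℝ) : ℂ) = 1 := by
        rw [← h3]
        push_cast
        refine Finset.sum_congr rfl fun i _ => ?_
        simp [Complex.conj_mul']
      exact_mod_cast this
    calc _ ≤ ∑ i, ‖star φ i * (diagonal (fun i => if ε < l i then 0 else (l i : ℂ)) *ᵥ φ) i‖ :=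
          norm_sum_le _ _
      _ ≤ ∑ i, ε * ‖φ i‖ ^ 2 := by
        refine Finset.sum_le_sum fun i _ => ?_
        rw [mulVec_diagonal, norm_mul, norm_mul, Pi.star_apply, norm_star]
        have : ‖(if ε < l i then 0 else (l i : ℂ))‖ ≤ ε := by
          split_ifs with h
          · simpa using hε0.le
          · rw [Complex.norm_real, Real.norm_of_nonneg (hl0 i)]; exact not_lt.1 h
        nlinarith [mul_le_mul_of_nonneg_right this (sq_nonneg ‖φ i‖)]
      _ = ε := by rw [← Finset.mul_sum, h4, mul_one]
end

section
/- Let ρ be a d×d density matrix, let φ_1, …, φ_k ∈ ℂ^d be orthonormal vectors, and let m ≥ k + 1. Then there exists an m×m density matrix ρ̂ such that ρ̂_{ij} = ⟨φ_i, ρ φ_j⟩ for all 1 ≤ i, j ≤ k. Consequently, for every α ∈ ℂ^k, setting ψ = Σ_{i=1}^k α_i φ_i and α' ∈ ℂ^m the extension of α by zeros, one has ⟨ψ, ρψ⟩ = ⟨α', ρ̂ α'⟩. -/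
open Matrix
open scoped ComplexOrder

/-- Let `ρ` be a `d × d` density matrix, `φ 1, …, φ k` orthonormal vectors in
`ℂ^d`, and `m ≥ k + 1`.  Then there is an `m × m` density matrix `ρ̂` whose top-left `k × k`
block consists of the entries `⟨φ i, ρ (φ j)⟩`; consequently, for every `α ∈ ℂ^k`, with
`ψ = ∑ i, α i • φ i` and `α'` the extension of `α` by zeros to `ℂ^m`, one has
`⟨ψ, ρ ψ⟩ = ⟨α', ρ̂ α'⟩`. -/
theorem stmt_4 {d k m : ℕ} (ρ : Matrix (Fin d) (Fin d) ℂ)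
    (hρ : ρ.PosSemidef) (hρtr : ρ.trace = 1)
    (φ : Fin k → (Fin d → ℂ))
    (hortho : ∀ i j : Fin k, star (φ i) ⬝ᵥ φ j = if i = j then 1 else 0)
    (hm : k + 1 ≤ m) :
    ∃ ρhat : Matrix (Fin m) (Fin m) ℂ, ρhat.PosSemidef ∧ ρhat.trace = 1 ∧
      (∀ i j : Fin k,
        ρhat (Fin.castLE (Nat.le_of_succ_le hm) i) (Fin.castLE (Nat.le_of_succ_le hm) j) =
          star (φ i) ⬝ᵥ ρ *ᵥ φ j) ∧
      ∀ α : Fin k → ℂ,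
        star (∑ i, α i • φ i) ⬝ᵥ ρ *ᵥ (∑ i, α i • φ i) =
          star (fun i : Fin m => if h : (i : ℕ) < k then α ⟨(i : ℕ), h⟩ else 0) ⬝ᵥ
            ρhat *ᵥ (fun i : Fin m => if h : (i : ℕ) < k then α ⟨(i : ℕ), h⟩ else 0) := by
  classical
  set c : Fin k → Fin m := Fin.castLE (Nat.le_of_succ_le hm) with hc
  have hcinj : Function.Injective c := Fin.castLE_injective _
  let B : Matrix (Fin d) (Fin k) ℂ := Matrix.of fun x i => φ i x
  let S : Matrix (Fin k) (Fin m) ℂ := Matrix.of fun i j => if c i = j then 1 else 0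
  let M : Matrix (Fin k) (Fin k) ℂ := Bᴴ * ρ * B
  let q : Fin m := ⟨k, hm⟩
  have hcq : ∀ i, c i ≠ q := by
    intro i h
    have := congrArg Fin.val h
    simp [c, q] at this
    have := i.2
    omega
  have hBB : Bᴴ * B = 1 := by
    ext i j
    rw [Matrix.one_apply, ← hortho i j]
    simp [Matrix.mul_apply, B, dotProduct]
  have hSS : S * Sᴴ = 1 := by
    ext i j
    simp [Matrix.mul_apply, S, Matrix.one_apply, hcinj.eq_iff, apply_ite, eq_comm]
  have hM : M.PosSemidef := hρ.conjTranspose_mul_mul_same B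
  have hC : (Sᴴ * M * S).PosSemidef := hM.conjTranspose_mul_mul_same S
  have hCtr : (Sᴴ * M * S).trace = M.trace := by
    rw [Matrix.trace_mul_comm, ← Matrix.mul_assoc, hSS, Matrix.one_mul]
  have ht : 0 ≤ 1 - M.trace := by
    have h1 := (hρ.conjTranspose_mul_mul_same (1 - B * Bᴴ)).trace_nonneg
    have hP : (B * Bᴴ) * (B * Bᴴ) = B * Bᴴ := by
      rw [Matrix.mul_assoc, ← Matrix.mul_assoc Bᴴ, hBB, Matrix.one_mul]
    have hQ : (1 - B * Bᴴ) * (1 - B * Bᴴ) = 1 - B * Bᴴ := by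
      simp [mul_sub, sub_mul, hP]
    have hH : (1 - B * Bᴴ)ᴴ = 1 - B * Bᴴ := by simp
    rw [hH, Matrix.trace_mul_comm, ← Matrix.mul_assoc, hQ, Matrix.sub_mul, Matrix.one_mul,
      Matrix.trace_sub, hρtr, Matrix.mul_assoc, Matrix.trace_mul_comm] at h1
    exact h1
  have hSent : ∀ i j, (Sᴴ * M * S) (c i) (c j) = M i j := by
    intro i j
    simp [Matrix.mul_apply, S, hcinj.eq_iff, apply_ite]
  have hMent : ∀ i j, M i j = star (φ i) ⬝ᵥ ρ *ᵥ φ j := by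
    intro i j
    simp only [M]
    rw [Matrix.mul_assoc]
    rfl
  refine ⟨Sᴴ * M * S + Matrix.diagonal (Pi.single q (1 - M.trace)), ?_, ?_, ?_, ?_⟩
  · refine hC.add (Matrix.PosSemidef.diagonal ?_)
    exact Pi.single_nonneg.2 ht
  · rw [Matrix.trace_add, hCtr, Matrix.trace_diagonal]
    simp
  · intro i j
    rw [Matrix.add_apply, hSent, hMent]
    simp [Matrix.diagonal_apply, Pi.single_apply, hcq]
  · intro α
    set α' : Fin m → ℂ := fun i => if h : (i : ℕ) < k then α ⟨(i : ℕ), h⟩ else 0 with hα'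
    have hψ : ∑ i, α i • φ i = B *ᵥ α := by
      ext x
      simp [Matrix.mulVec, dotProduct, B, mul_comm]
    have hS : S *ᵥ α' = α := by
      ext i
      have h1 : (S *ᵥ α') i = α' (c i) := by
        simp [Matrix.mulVec, dotProduct, S]
      rw [h1]
      simp [α', c]
    have hD : Matrix.diagonal (Pi.single q (1 - M.trace)) *ᵥ α' = 0 := by
      ext i
      rw [Matrix.mulVec_diagonal]
      by_cases h : i = q
      · subst h
        simp [α', q]
      · simp [h]
    rw [hψ, Matrix.add_mulVec, hD, add_zero, ← Matrix.mulVec_mulVec, hS,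
      ← Matrix.mulVec_mulVec, Matrix.dotProduct_mulVec (star α'), ← Matrix.star_mulVec, hS]
    simp only [M]
    rw [Matrix.star_mulVec, ← Matrix.dotProduct_mulVec, Matrix.mulVec_mulVec, Matrix.mulVec_mulVec,
      Matrix.mul_assoc]
end

section
/- Let o be a real-valued, square-integrable random variable with mean μ = E[o] satisfying μ ∈ [−1, 1], and let T ≥ 1. Define the truncation s = sign(o)·min(|o|, T). Then |E[o] − E[s]| ≤ √(E[(o−μ)²]·Pr[o−μ > T−1]) + √(E[(o−μ)²]·Pr[o−μ < −(T−1)]) + (T−1)·Pr[|o−μ| > T−1]. -/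
open MeasureTheory

lemma aux_cs_s7 {Ω : Type*} [MeasurableSpace Ω] (P : Measure Ω) [IsProbabilityMeasure P]
    (X : Ω → ℝ) (hX : MemLp X 2 P) (A : Set Ω) :
    ∫ ω in A, |X ω| ∂P ≤ Real.sqrt ((∫ ω, (X ω) ^ 2 ∂P) * (P A).toReal) := by
  have h := integral_mul_le_Lp_mul_Lq_of_nonneg (μ := P.restrict A) (p := 2) (q := 2)
    Real.HolderConjugate.two_two
    (f := fun ω => |X ω|) (g := fun _ => (1 : ℝ))
    (Filter.Eventually.of_forall fun _ => abs_nonneg _)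
    (Filter.Eventually.of_forall fun _ => zero_le_one)
    (by rw [ENNReal.ofReal_ofNat]; exact (hX.restrict A).abs) (memLp_const _)
  simp only [mul_one, Real.rpow_ofNat, sq_abs, one_pow, integral_const, smul_eq_mul,
    ← Real.sqrt_eq_rpow, measureReal_def, Measure.restrict_apply_univ] at h
  refine h.trans ?_
  rw [← Real.sqrt_mul (integral_nonneg fun _ => sq_nonneg _)]
  apply Real.sqrt_le_sqrt
  apply mul_le_mul_of_nonneg_right _ ENNReal.toReal_nonneg
  exact setIntegral_le_integral hX.integrable_sq (Filter.Eventually.of_forall fun _ => sq_nonneg _)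

lemma aux_trunc (x T : ℝ) (hT : 1 ≤ T) : Real.sign x * min |x| T = max (-T) (min x T) := by
  rcases lt_trichotomy x 0 with h | h | h
  · rw [Real.sign_of_neg h, abs_of_neg h]; grind
  · subst h; simp; grind
  · rw [Real.sign_of_pos h, abs_of_pos h]; grind

/-- **bias of truncation.** Let `o` be a square-integrable real random variable
with mean `μ₀ = E[o] ∈ [-1,1]` and `T ≥ 1`.  With `s = sign(o) · min(|o|, T)` the truncation
of `o` to `[-T, T]`, one has
`|E[o] - E[s]| ≤ √(E[(o-μ₀)²] Pr[o-μ₀ > T-1]) + √(E[(o-μ₀)²] Pr[o-μ₀ < -(T-1)])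
  + (T-1) Pr[|o-μ₀| > T-1]`. -/
theorem stmt_7 {Ω : Type*} [MeasurableSpace Ω] (P : Measure Ω) [IsProbabilityMeasure P]
    (o : Ω → ℝ) (ho : MemLp o 2 P)
    (hμlb : -1 ≤ ∫ ω, o ω ∂P) (hμub : ∫ ω, o ω ∂P ≤ 1)
    (T : ℝ) (hT : 1 ≤ T) :
    |(∫ ω, o ω ∂P) - ∫ ω, Real.sign (o ω) * min |o ω| T ∂P| ≤
      Real.sqrt ((∫ ω, (o ω - ∫ x, o x ∂P) ^ 2 ∂P) *
          (P {ω | T - 1 < o ω - ∫ x, o x ∂P}).toReal) +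
        Real.sqrt ((∫ ω, (o ω - ∫ x, o x ∂P) ^ 2 ∂P) *
          (P {ω | o ω - ∫ x, o x ∂P < -(T - 1)}).toReal) +
        (T - 1) * (P {ω | T - 1 < |o ω - ∫ x, o x ∂P|}).toReal := by
  have hoi : Integrable o P := ho.integrable (by norm_num)
  simp only [aux_trunc _ T hT]
  set m := ∫ ω, o ω ∂P with hm
  have hX : MemLp (fun ω => o ω - m) 2 P := ho.sub (memLp_const m)
  have hXi : Integrable (fun ω => |o ω - m|) P := (hX.integrable (by norm_num)).abs
  have hsi : Integrable (fun ω => max (-T) (min (o ω) T)) P :=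
    (integrable_const (-T)).sup (hoi.inf (integrable_const T))
  have hA : NullMeasurableSet {ω | T - 1 < o ω - m} P :=
    nullMeasurableSet_lt aemeasurable_const hX.1.aemeasurable
  have hB : NullMeasurableSet {ω | o ω - m < -(T - 1)} P :=
    nullMeasurableSet_lt hX.1.aemeasurable aemeasurable_const
  have h1 := aux_cs_s7 P _ hX {ω | T - 1 < o ω - m}
  have h2 := aux_cs_s7 P _ hX {ω | o ω - m < -(T - 1)}
  rw [← integral_indicator₀ hA] at h1
  rw [← integral_indicator₀ hB] at h2
  have h3 : 0 ≤ (T - 1) * (P {ω | T - 1 < |o ω - m|}).toReal :=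
    mul_nonneg (by linarith) ENNReal.toReal_nonneg
  have iA := hXi.indicator₀ hA
  have iB := hXi.indicator₀ hB
  have key : |m - ∫ ω, max (-T) (min (o ω) T) ∂P| ≤
      ∫ ω, ({ω | T - 1 < o ω - m}.indicator (fun ω => |o ω - m|) ω
        + {ω | o ω - m < -(T - 1)}.indicator (fun ω => |o ω - m|) ω) ∂P := by
    rw [hm, ← integral_sub hoi hsi]
    refine (abs_integral_le_integral_abs).trans (integral_mono (hoi.sub hsi).abs (iA.add iB) ?_)
    intro ω
    simp only [Set.indicator, Set.mem_setOf_eq, ← hm, Pi.add_apply, Pi.sub_apply]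
    grind
  rw [integral_add iA iB] at key
  linarith
end

section
/- Let ρ be a d×d density matrix, ε ∈ (0,1], and B > 0. Suppose O_1, …, O_m are d×d Hermitian matrices, where each O_t = Σ_{j∈J_t} w_{t,j} |ψ^{t,j}⟩⟨ψ^{t,j}| for a finite index set J_t, orthonormal vectors {ψ^{t,j}}_{j∈J_t} ⊆ ℂ^d, and real weights satisfying |w_{t,j}| > ε/2 for all j ∈ J_t and Σ_{j∈J_t} w_{t,j}² ≤ B. Let S_t be the linear span of all ψ^{r,j} with r < t, j ∈ J_r, and let P_t be the orthogonal projection onto S_t. If for every t ∈ {1, …, m} one has |tr(P_t O_t P_t ρ) − tr(O_t ρ)| > (3/16)ε, then m ≤ 4096 B²/(9 ε⁴). -/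
open Matrix
open scoped ComplexOrder

noncomputable def fro {d : ℕ} (X : Matrix (Fin d) (Fin d) ℂ) : ℝ := ∑ i, ∑ j, ‖X i j‖ ^ 2

theorem fro_nonneg {d : ℕ} (X : Matrix (Fin d) (Fin d) ℂ) : 0 ≤ fro X := by
  unfold fro; positivity

theorem fro_trace {d : ℕ} (X : Matrix (Fin d) (Fin d) ℂ) : (Xᴴ * X).trace = (fro X : ℂ) := by
  simp only [fro, trace, diag, mul_apply, conjTranspose_apply]
  rw [Finset.sum_comm]
  push_cast
  refine Finset.sum_congr rfl fun i _ => Finset.sum_congr rfl fun j _ => ?_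
  exact RCLike.conj_mul _

theorem fro_star {d : ℕ} (X : Matrix (Fin d) (Fin d) ℂ) : fro Xᴴ = fro X := by
  simp only [fro, conjTranspose_apply, norm_star]
  rw [Finset.sum_comm]

section
open scoped Matrix.Norms.Frobenius
theorem fro_norm {d : ℕ} (X : Matrix (Fin d) (Fin d) ℂ) : fro X = ‖X‖ ^ 2 := by
  rw [frobenius_norm_def, ← Real.sqrt_eq_rpow, Real.sq_sqrt]
  · simp [fro]
  · positivity

theorem fro_mul {d : ℕ} (X Y : Matrix (Fin d) (Fin d) ℂ) : fro (X * Y) ≤ fro X * fro Y := by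
  rw [fro_norm, fro_norm, fro_norm, ← mul_pow]
  exact pow_le_pow_left₀ (norm_nonneg _) (frobenius_norm_mul X Y) 2
end

theorem fro_cs {d : ℕ} (X Y : Matrix (Fin d) (Fin d) ℂ) :
    ‖(Xᴴ * Y).trace‖ ^ 2 ≤ fro X * fro Y := by
  have h : ‖(Xᴴ * Y).trace‖ ≤ ∑ p : Fin d × Fin d, ‖X p.2 p.1‖ * ‖Y p.2 p.1‖ := by
    simp only [trace, diag, mul_apply, conjTranspose_apply]
    rw [← Fintype.sum_prod_type' (f := fun i j => star (X j i) * Y j i)]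
    refine (norm_sum_le _ _).trans (le_of_eq ?_)
    simp
  refine (pow_le_pow_left₀ (norm_nonneg _) h 2).trans ?_
  refine (Finset.sum_mul_sq_le_sq_mul_sq _ _ _).trans (le_of_eq ?_)
  unfold fro
  rw [Fintype.sum_prod_type, Fintype.sum_prod_type, Finset.sum_comm]
  congr 1
  rw [Finset.sum_comm]

theorem exists_proj {d : ℕ} (S : Submodule ℂ (Fin d → ℂ)) :
    ∃ P : Matrix (Fin d) (Fin d) ℂ, P.IsHermitian ∧ (∀ v, P *ᵥ v ∈ S) ∧ ∀ v ∈ S, P *ᵥ v = v := by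
  let K : Submodule ℂ (EuclideanSpace ℂ (Fin d)) :=
    S.comap (WithLp.linearEquiv 2 ℂ (Fin d → ℂ)).toLinearMap
  let e := Matrix.toEuclideanCLM (n := Fin d) (𝕜 := ℂ)
  have key : ∀ v, WithLp.toLp 2 (e.symm K.starProjection *ᵥ v)
      = K.starProjection (WithLp.toLp 2 v) := by
    intro v
    rw [← Matrix.toEuclideanCLM_toLp]
    change e (e.symm K.starProjection) _ = _
    rw [e.apply_symm_apply]
  refine ⟨e.symm K.starProjection, ?_, ?_, ?_⟩
  · have := isSelfAdjoint_starProjection K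
    change star (e.symm K.starProjection) = _
    apply e.injective
    have h1 : e (star (e.symm K.starProjection)) = star (e (e.symm K.starProjection)) := e.map_star' _
    rw [e.apply_symm_apply, this.star_eq] at h1
    exact h1.trans (e.apply_symm_apply _).symm
  · intro v
    have h : K.starProjection (WithLp.toLp 2 v) ∈ K := K.starProjection_apply_mem _
    rw [← key] at h
    exact h
  · intro v hv
    have h : K.starProjection (WithLp.toLp 2 v) = WithLp.toLp 2 v :=
      Submodule.starProjection_eq_self_iff.2 hv
    rw [← key] at h
    exact WithLp.toLp_injective 2 h

theorem proj_mul {d : ℕ} {S T : Submodule ℂ (Fin d → ℂ)} (hST : S ≤ T)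
    {P Q : Matrix (Fin d) (Fin d) ℂ} (hP : ∀ v, P *ᵥ v ∈ S) (hQ : ∀ v ∈ T, Q *ᵥ v = v) :
    Q * P = P := by
  refine Matrix.ext_of_mulVec_single fun i => ?_
  rw [← mulVec_mulVec]
  exact hQ _ (hST (hP _))

theorem exists_factor {d : ℕ} (ρ : Matrix (Fin d) (Fin d) ℂ) (hρ : ρ.PosSemidef) :
    ∃ A : Matrix (Fin d) (Fin d) ℂ, ρ = A * Aᴴ := by
  open scoped MatrixOrder Matrix.Norms.L2Operator in
  obtain ⟨A, hA⟩ := CStarAlgebra.nonneg_iff_eq_mul_star_self.1 hρ.nonneg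
  exact ⟨A, hA⟩

theorem fro_obs {d : ℕ} {ι : Type*} [DecidableEq ι] (J : Finset ι) (ψ : ι → Fin d → ℂ)
    (w : ι → ℝ)
    (hortho : ∀ i ∈ J, ∀ j ∈ J, star (ψ i) ⬝ᵥ ψ j = if i = j then 1 else 0) :
    fro (∑ j ∈ J, (w j : ℂ) • Matrix.vecMulVec (ψ j) (star (ψ j))) = ∑ j ∈ J, w j ^ 2 := by
  apply Complex.ofReal_injective
  rw [← fro_trace, conjTranspose_sum, Finset.sum_mul, trace_sum]
  push_cast
  refine Finset.sum_congr rfl fun i hi => ?_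
  rw [Finset.mul_sum, trace_sum, Finset.sum_eq_single i]
  · simp only [conjTranspose_smul, conjTranspose_vecMulVec, star_star, Matrix.smul_mul, Matrix.mul_smul,
      vecMulVec_mul_vecMulVec, trace_smul, trace_vecMulVec, dotProduct_smul, hortho i hi i hi]
    have := hortho i hi i hi
    rw [dotProduct_comm] at this
    simp [this, sq]
  · intro j hj hne
    simp only [conjTranspose_smul, conjTranspose_vecMulVec, star_star, Matrix.smul_mul, Matrix.mul_smul,
      vecMulVec_mul_vecMulVec, trace_smul, trace_vecMulVec, dotProduct_smul, hortho i hi j hj]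
    simp [hne.symm]
  · intro h; exact absurd hi h

theorem fro_proj_le {d : ℕ} {A P : Matrix (Fin d) (Fin d) ℂ} (hP : Pᴴ = P) (hPP : P * P = P)
    (hA : fro A = 1) : fro (P * A) ≤ 1 := by
  have hquad : ∀ Q : Matrix (Fin d) (Fin d) ℂ, Qᴴ = Q → Q * Q = Q →
      (fro (Q * A) : ℂ) = (Aᴴ * (Q * A)).trace := by
    intro Q hQ hQQ
    rw [← fro_trace, conjTranspose_mul, hQ, Matrix.mul_assoc, ← Matrix.mul_assoc Q, hQQ]
  have : fro ((1 - P) * A) = fro A - fro (P * A) := by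
    apply Complex.ofReal_injective
    push_cast
    have h1 : (fro A : ℂ) = (Aᴴ * A).trace := (fro_trace A).symm
    rw [hquad _ hP hPP, h1, hquad (1 - P), ← trace_sub, ← mul_sub, sub_mul, one_mul]
    · rw [conjTranspose_sub, hP, conjTranspose_one]
    · rw [sub_mul, mul_sub, mul_sub, hPP]; simp
  have := fro_nonneg ((1 - P) * A)
  linarith

/-- one step -/
theorem step {d : ℕ} {A P P' O : Matrix (Fin d) (Fin d) ℂ} {B : ℝ}
    (hP : Pᴴ = P) (hP' : P'ᴴ = P') (hPP : P * P = P) (hPP' : P' * P' = P') (h : P' * P = P)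
    (hOH : Oᴴ = O) (hO : P' * O = O) (hA : fro A = 1) (hB : fro O ≤ B) :
    ‖(P * O * P * (A * Aᴴ)).trace - (O * (A * Aᴴ)).trace‖ ^ 2
      ≤ 4 * B * (fro (P' * A) - fro (P * A)) := by
  have h2 : P * P' = P := by
    have := congrArg conjTranspose h
    rwa [conjTranspose_mul, hP, hP'] at this
  have hO2 : O * P' = O := by
    have := congrArg conjTranspose hO
    rwa [conjTranspose_mul, hOH, hP'] at this
  have hquad : ∀ Q : Matrix (Fin d) (Fin d) ℂ, Qᴴ = Q → Q * Q = Q →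
      (fro (Q * A) : ℂ) = (Aᴴ * (Q * A)).trace := by
    intro Q hQ hQQ
    rw [← fro_trace, conjTranspose_mul, hQ, Matrix.mul_assoc, ← Matrix.mul_assoc Q, hQQ]
  have hR : fro ((P' - P) * A) = fro (P' * A) - fro (P * A) := by
    apply Complex.ofReal_injective
    push_cast
    rw [hquad _ hP hPP, hquad _ hP' hPP', hquad (P' - P), ← trace_sub, ← mul_sub, sub_mul]
    · rw [conjTranspose_sub, hP, hP']
    · rw [sub_mul, mul_sub, mul_sub, hPP, hPP', h, h2]; simp
  have hPA : fro (P * A) ≤ 1 := fro_proj_le hP hPP hA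
  have hB0 : 0 ≤ B := (fro_nonneg _).trans hB
  set R := P' - P with hRdef
  have hRH : Rᴴ = R := by rw [hRdef, conjTranspose_sub, hP, hP']
  have e1 : (P * O * P * (A * Aᴴ)).trace - (O * (A * Aᴴ)).trace
      = -(((R * A)ᴴ * (O * A)).trace + ((O * (P * A))ᴴ * (R * A)).trace) := by
    have t : ∀ X : Matrix (Fin d) (Fin d) ℂ, (X * (A * Aᴴ)).trace = (Aᴴ * X * A).trace := by
      intro X
      rw [← Matrix.mul_assoc, trace_mul_comm, Matrix.mul_assoc]
    rw [t, t, ← trace_sub, ← trace_add, ← trace_neg]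
    congr 1
    simp only [conjTranspose_mul, hRH, hOH, hP]
    have e2 : P * O * P - O = -(R * O + P * O * R) := by
      rw [hRdef, sub_mul, mul_sub, hO, Matrix.mul_assoc P O P', hO2]; abel
    calc Aᴴ * (P * O * P) * A - Aᴴ * O * A = Aᴴ * (P * O * P - O) * A := by noncomm_ring
      _ = _ := by rw [e2]; noncomm_ring
  have c1 : ‖((R * A)ᴴ * (O * A)).trace‖ ^ 2 ≤ B * fro (R * A) := by
    refine (fro_cs _ _).trans ?_
    rw [mul_comm]
    refine mul_le_mul_of_nonneg_right ?_ (fro_nonneg _)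
    have := fro_mul O A
    rw [hA] at this; linarith
  have c2 : ‖((O * (P * A))ᴴ * (R * A)).trace‖ ^ 2 ≤ B * fro (R * A) := by
    refine (fro_cs _ _).trans ?_
    refine mul_le_mul_of_nonneg_right ?_ (fro_nonneg _)
    refine (fro_mul O _).trans ?_
    calc fro O * fro (P * A) ≤ fro O * 1 := mul_le_mul_of_nonneg_left hPA (fro_nonneg _)
      _ ≤ B := by linarith
  rw [e1, norm_neg, ← hR]
  have n := norm_add_le ((R * A)ᴴ * (O * A)).trace ((O * (P * A))ᴴ * (R * A)).trace
  have := pow_le_pow_left₀ (norm_nonneg _) n 2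
  nlinarith [sq_nonneg (‖((R * A)ᴴ * (O * A)).trace‖ - ‖((O * (P * A))ᴴ * (R * A)).trace‖)]

/-- **mistake bound for bounded-Frobenius-norm observables.**
Let `ρ` be a `d × d` density matrix, `ε ∈ (0,1]`, `B > 0`.  Suppose the observables
`O t = ∑_{j ∈ J t} w t j • |ψ t j⟩⟨ψ t j|` (for `t = 1, …, m`) are built from orthonormal
families of eigenvectors with real weights satisfying `|w t j| > ε/2` and
`∑_{j ∈ J t} (w t j)² ≤ B`.  Let `S t` be the span of all eigenvectors appearing in earlier
rounds, and `P t` the orthogonal projection onto `S t` (a Hermitian idempotent with range in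
`S t` fixing `S t` pointwise).  If `|tr(P t * O t * P t * ρ) - tr(O t * ρ)| > (3/16) ε` for
every `t`, then `m ≤ 4096 B² / (9 ε⁴)`. -/
theorem stmt_12 {d m : ℕ} {ι : Type*} [DecidableEq ι]
    (ρ : Matrix (Fin d) (Fin d) ℂ) (hρ : ρ.PosSemidef) (hρtr : ρ.trace = 1)
    (ε B : ℝ) (hε0 : 0 < ε) (hε1 : ε ≤ 1) (hB : 0 < B)
    (J : Fin m → Finset ι)
    (ψ : Fin m → ι → (Fin d → ℂ)) (w : Fin m → ι → ℝ)
    (hortho : ∀ t, ∀ i ∈ J t, ∀ j ∈ J t,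
      star (ψ t i) ⬝ᵥ ψ t j = if i = j then 1 else 0)
    (hwbig : ∀ t, ∀ j ∈ J t, ε / 2 < |w t j|)
    (hwF : ∀ t, ∑ j ∈ J t, (w t j) ^ 2 ≤ B)
    (O : Fin m → Matrix (Fin d) (Fin d) ℂ)
    (hO : ∀ t, O t = ∑ j ∈ J t, (w t j : ℂ) • Matrix.vecMulVec (ψ t j) (star (ψ t j)))
    (P : Fin m → Matrix (Fin d) (Fin d) ℂ)
    (hPH : ∀ t, (P t).IsHermitian) (hPP : ∀ t, P t * P t = P t)
    (hPmem : ∀ t v, P t *ᵥ v ∈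
      Submodule.span ℂ {x | ∃ r : Fin m, ∃ j ∈ J r, r < t ∧ x = ψ r j})
    (hPfix : ∀ t, ∀ v ∈ Submodule.span ℂ {x | ∃ r : Fin m, ∃ j ∈ J r, r < t ∧ x = ψ r j},
      P t *ᵥ v = v)
    (hdev : ∀ t, 3 / 16 * ε <
      ‖(P t * O t * P t * ρ).trace - (O t * ρ).trace‖) :
    (m : ℝ) ≤ 4096 * B ^ 2 / (9 * ε ^ 4) := by
  rcases Nat.eq_zero_or_pos m with hm | hm
  · subst hm
    simp only [Nat.cast_zero]
    positivity
  obtain ⟨A, hA⟩ := exists_factor ρ hρ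
  have hA1 : fro A = 1 := by
    apply Complex.ofReal_injective
    rw [← fro_trace, trace_mul_comm, ← hA, hρtr]; simp
  let S : ℕ → Submodule ℂ (Fin d → ℂ) := fun n =>
    Submodule.span ℂ {x | ∃ r : Fin m, ∃ j ∈ J r, (r : ℕ) < n ∧ x = ψ r j}
  have hS : ∀ n, S n ≤ S (n + 1) := by
    intro n
    refine Submodule.span_mono ?_
    rintro x ⟨r, j, hj, hr, hx⟩
    exact ⟨r, j, hj, by omega, hx⟩
  choose Q hQH hQm hQf using fun n => exists_proj (S n)
  have hQQ : ∀ n, Q n * Q n = Q n := fun n => proj_mul le_rfl (hQm n) (hQf n)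
  have hPQ : ∀ t : Fin m, P t = Q t := by
    intro t
    have h1 : P t * Q t = Q t := proj_mul (S := S t) le_rfl (hQm t) (hPfix t)
    have h2 : Q t * P t = P t := proj_mul (S := S t) le_rfl (hPmem t) (hQf t)
    have h3 := congrArg conjTranspose h2
    rw [conjTranspose_mul, (hPH t).eq, (hQH t).eq] at h3
    rw [← h3, h1]
  have hstep : ∀ t : Fin m, 9 * ε ^ 2 / 256 ≤
      4 * B * (fro (Q (t + 1) * A) - fro (Q t * A)) := by
    intro t
    have hOB : fro (O t) ≤ B := by
      rw [hO, fro_obs _ _ _ (hortho t)]; exact hwF t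
    have hOH : (O t)ᴴ = O t := by
      rw [hO, conjTranspose_sum]
      simp [conjTranspose_smul, conjTranspose_vecMulVec]
    have hQO : Q (t + 1) * O t = O t := by
      rw [hO, Finset.mul_sum]
      refine Finset.sum_congr rfl fun j hj => ?_
      rw [Matrix.mul_smul, mul_vecMulVec, hQf]
      exact Submodule.subset_span ⟨t, j, hj, by simp, rfl⟩
    have := step (hQH t).eq (hQH (t + 1)).eq (hQQ t) (hQQ (t + 1))
      (proj_mul (hS t) (hQm t) (hQf (t + 1))) hOH hQO hA1 hOB
    refine le_trans ?_ this
    have hd := hdev t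
    rw [hPQ, hA] at hd
    have := pow_le_pow_left₀ (by positivity) hd.le 2
    refine le_trans (le_of_eq ?_) this
    ring
  have hBε : ε ^ 2 ≤ 4 * B := by
    let t : Fin m := ⟨0, hm⟩
    have hne : (J t).Nonempty := by
      by_contra hcon
      rw [Finset.not_nonempty_iff_eq_empty] at hcon
      have hd := hdev t
      rw [hO, hcon] at hd
      simp at hd
      linarith
    obtain ⟨j, hj⟩ := hne
    have h1 := Finset.single_le_sum (f := fun j => w t j ^ 2) (fun i _ => sq_nonneg _) hj
    have h2 := hwF t
    have h3 := pow_le_pow_left₀ (by positivity) (hwbig t j hj).le 2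
    rw [sq_abs] at h3
    nlinarith
  have hsum : (m : ℝ) * (9 * ε ^ 2 / 256) ≤ 4 * B := by
    have h1 : ∑ n ∈ Finset.range m, (9 * ε ^ 2 / 256) ≤
        ∑ n ∈ Finset.range m, 4 * B * (fro (Q (n + 1) * A) - fro (Q n * A)) :=
      Finset.sum_le_sum fun n hn => hstep ⟨n, Finset.mem_range.1 hn⟩
    rw [← Finset.mul_sum, Finset.sum_range_sub (fun n => fro (Q n * A))] at h1
    have h2 := fro_proj_le (hQH m).eq (hQQ m) hA1
    have h3 := fro_nonneg (Q 0 * A)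
    simp only [Finset.sum_const, Finset.card_range, nsmul_eq_mul] at h1
    nlinarith
  rw [le_div_iff₀ (by positivity)]
  have : (m : ℝ) * (9 * ε ^ 4) = 256 * ε ^ 2 * (m * (9 * ε ^ 2 / 256)) := by ring
  rw [this]
  calc 256 * ε ^ 2 * (m * (9 * ε ^ 2 / 256)) ≤ 256 * ε ^ 2 * (4 * B) := by gcongr
    _ ≤ 256 * (4 * B) * (4 * B) := by gcongr
    _ = _ := by ring
end
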